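/- Let OABC be a lattice equable quadrilateral and suppose the diagonal OB is interior to the quadrilateral (equivalently, A and C lie strictly on opposite sides of the line OB). If the length |OB| is rational, then OABC is congruent, via an isometry of ℝ², to the right trapezoid with vertices (0,0), (6,0), (6,4), (3,4) (side lengths 6,4,3,5), with the rational diagonal having length 5. In particular, with this single exception, every interior diagonal of a lattice equable quadrilateral has irrational length. -/

import Mathlib

noncomputable section

/-- Euclidean distance between two points of `ℝ × ℝ`. -/
def dist2 (p q : ℝ × ℝ) : ℝ := Real.sqrt ((p.1 - q.1) ^ 2 + (p.2 - q.2) ^ 2)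

/-- Signed cross product of the vectors `q - p` and `r - p`. -/
def cross (p q r : ℝ × ℝ) : ℝ :=
  (q.1 - p.1) * (r.2 - p.2) - (q.2 - p.2) * (r.1 - p.1)

/-- Three points are collinear. -/
def Collinear3 (p q r : ℝ × ℝ) : Prop := cross p q r = 0

/-- Dot product on `ℝ × ℝ`. -/
def dot2 (p q : ℝ × ℝ) : ℝ := p.1 * q.1 + p.2 * q.2

/-- Closed segment between two points. -/
def Seg (p q : ℝ × ℝ) : Set (ℝ × ℝ) :=
  {x | ∃ t : ℝ, 0 ≤ t ∧ t ≤ 1 ∧ x = (1 - t) • p + t • q}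

/-- Twice the signed (shoelace) area of the quadrilateral `O A B C`. -/
def shoelace (O A B C : ℝ × ℝ) : ℝ :=
  (O.1 * A.2 - A.1 * O.2) + (A.1 * B.2 - B.1 * A.2) +
    (B.1 * C.2 - C.1 * B.2) + (C.1 * O.2 - O.1 * C.2)

/-- Area of the (simple) quadrilateral `O A B C`, by the shoelace formula. -/
def quadArea (O A B C : ℝ × ℝ) : ℝ := |shoelace O A B C| / 2

/-- Perimeter of the quadrilateral `O A B C`. -/
def quadPerim (O A B C : ℝ × ℝ) : ℝ :=
  dist2 O A + dist2 A B + dist2 B C + dist2 C O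

/-- Simple quadrilateral: no three vertices collinear, and the four closed sides
intersect only at shared endpoints. -/
def IsSimpleQuad (O A B C : ℝ × ℝ) : Prop :=
  ¬ Collinear3 O A B ∧ ¬ Collinear3 A B C ∧ ¬ Collinear3 B C O ∧ ¬ Collinear3 C O A ∧
  Seg O A ∩ Seg B C = ∅ ∧ Seg A B ∩ Seg C O = ∅ ∧
  Seg O A ∩ Seg A B = {A} ∧ Seg A B ∩ Seg B C = {B} ∧
  Seg B C ∩ Seg C O = {C} ∧ Seg C O ∩ Seg O A = {O}

/-- Quadrilateral `O A B C`: simple, with vertices in counterclockwise order. -/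
def IsQuad (O A B C : ℝ × ℝ) : Prop :=
  IsSimpleQuad O A B C ∧ 0 < shoelace O A B C

/-- A point of `ℝ × ℝ` with integer coordinates. -/
def IsLatticePt (p : ℝ × ℝ) : Prop := ∃ m n : ℤ, p = ((m : ℝ), (n : ℝ))

/-- An isometry of the Euclidean plane `ℝ × ℝ`. -/
def IsIsometry2 (f : ℝ × ℝ → ℝ × ℝ) : Prop :=
  Function.Bijective f ∧ ∀ p q, dist2 (f p) (f q) = dist2 p q

/-- The four vertices are in convex position: no vertex lies in the convex hull
of the other three. -/
def ConvexPos (O A B C : ℝ × ℝ) : Prop :=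
  O ∉ convexHull ℝ ({A, B, C} : Set (ℝ × ℝ)) ∧
  A ∉ convexHull ℝ ({O, B, C} : Set (ℝ × ℝ)) ∧
  B ∉ convexHull ℝ ({O, A, C} : Set (ℝ × ℝ)) ∧
  C ∉ convexHull ℝ ({O, A, B} : Set (ℝ × ℝ))

/-- The segment `pq` is parallel to the segment `rs`. -/
def Para (p q r s : ℝ × ℝ) : Prop :=
  (q.1 - p.1) * (s.2 - r.2) - (q.2 - p.2) * (s.1 - r.1) = 0

/-- Area of the triangle `p q r`. -/
def triArea (p q r : ℝ × ℝ) : ℝ := |cross p q r| / 2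

/-- Heron's formula: area of a triangle with side lengths `p`, `q`, `r`. -/
def heronArea (p q r : ℝ) : ℝ :=
  Real.sqrt ((p + q + r) * (-p + q + r) * (p - q + r) * (p + q - r)) / 4

end

/-!
The area, hence the perimeter, is rational, while the sides are square roots of integers: a Galois
conjugation sending one irrational square root to its negative would decrease the sum, so all sides
are integers. The diagonal `O B` therefore cuts the quadrilateral into two triangles with integer
sides and area. If `u`, `v`, `w` are the tangent lengths of such a triangle, with `u + v = |O B|`,
its area satisfies `T ^ 2 = (u + v + w) * u * v * w`, and equability reads
`T + T' = (u + v + 2 * w) + (u' + v' + 2 * w')`. Hence `T ≤ u + v + 2 * w` for one of the two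
triangles. As the other one forces `5 ≤ u + v`, this leaves only the triangles with sides
`(5, 5, 8)` and `(5, 3, 4)` for it, and `(5, 5, 6)` for the other. Integrality of the dot product
of `A - O` and `C - O` determines how they are glued, and `(5, 5, 8)` is excluded because the result
degenerates to a triangle.
-/

open Polynomial in
theorem minpoly_eq_X_sq_sub_C {K L : Type*} [Field K] [Field L] [Algebra K L] {x : L} {c : K}
    (hx : x ∉ (algebraMap K L).range) (hxc : x ^ 2 = algebraMap K L c) :
    minpoly K x = X ^ 2 - C c := by
  have hroot : aeval x (X ^ 2 - C c) = 0 := by simp [hxc]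
  have hmonic : (X ^ 2 - C c).Monic := monic_X_pow_sub_C c two_ne_zero
  have hint : IsIntegral K x := ⟨X ^ 2 - C c, hmonic, hroot⟩
  refine (eq_of_monic_of_dvd_of_natDegree_le (minpoly.monic hint) hmonic
    (minpoly.dvd K x hroot) ?_).symm
  rw [natDegree_X_pow_sub_C]
  exact (minpoly.two_le_natDegree_iff hint).2 hx

theorem exists_algHom_apply_eq_of_sq_eq {K L E : Type*} [Field K] [Field L] [Field E]
    [Algebra K L] [Algebra K E] [Algebra.IsAlgebraic K L] [IsAlgClosed E] {x : L} {y : E} {c : K}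
    (hx : x ∉ (algebraMap K L).range) (hxc : x ^ 2 = algebraMap K L c)
    (hyc : y ^ 2 = algebraMap K E c) : ∃ φ : L →ₐ[K] E, φ x = y := by
  refine IntermediateField.exists_algHom_of_splits_of_aeval
    (fun z => ⟨Algebra.IsIntegral.isIntegral z, IsAlgClosed.splits _⟩) ?_
  simp [minpoly_eq_X_sq_sub_C hx hxc, hyc]

theorem irrational_sum_of_sq_eq_ratCast {ι : Type*} [Fintype ι] {x : ι → ℝ}
    (hnonneg : ∀ i, 0 ≤ x i) (hsq : ∀ i, ∃ q : ℚ, x i ^ 2 = q) {j : ι} (hj : Irrational (x j)) :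
    Irrational (∑ i, x i) := by
  rintro ⟨r, hr⟩
  choose q hq using hsq
  have halg (i : ι) : x i ∈ algebraicClosure ℚ ℝ :=
    mem_algebraicClosure_iff.2 <| IsAlgebraic.of_pow two_pos <|
      hq i ▸ isAlgebraic_algebraMap (A := ℝ) (q i)
  have : Algebra.IsAlgebraic ℚ (algebraicClosure ℚ ℝ) := algebraicClosure.isAlgebraic ℚ ℝ
  let y (i : ι) : algebraicClosure ℚ ℝ := ⟨x i, halg i⟩
  have hyq (i : ι) : y i ^ 2 = algebraMap ℚ _ (q i) := Subtype.ext (hq i)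
  have hxq (i : ι) : (x i : ℂ) ^ 2 = algebraMap ℚ ℂ (q i) := by
    rw [← Complex.ofReal_pow, hq]; simp
  have hyj : y j ∉ (algebraMap ℚ (algebraicClosure ℚ ℝ)).range := fun ⟨t, ht⟩ =>
    hj ⟨t, congrArg Subtype.val ht⟩
  obtain ⟨φ, hφ⟩ := exists_algHom_apply_eq_of_sq_eq (y := -(x j : ℂ)) hyj (hyq j)
    (by rw [neg_sq, hxq])
  -- Being `±x i`, no conjugate has larger real part than `x i`, and that of `x j` is smaller.
  have hle (i : ι) : (φ (y i)).re ≤ x i := by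
    have hφsq : φ (y i) ^ 2 = (x i : ℂ) ^ 2 := by rw [← map_pow, hyq, AlgHom.commutes, hxq]
    rcases sq_eq_sq_iff_eq_or_eq_neg.1 hφsq with h | h <;> simp [h, hnonneg i]
  have hlt : (φ (y j)).re < x j := by
    have hpos : 0 < x j := (hnonneg j).lt_of_ne' hj.ne_zero
    simpa [hφ] using hpos
  have hsum : ∑ i, (φ (y i)).re = r := by
    have hyr : ∑ i, y i = algebraMap ℚ _ r := Subtype.ext (by simp [y, ← hr])
    rw [← Complex.re_sum, ← map_sum, hyr, AlgHom.commutes]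
    simp
  exact (Finset.sum_lt_sum (fun i _ => hle i) ⟨j, Finset.mem_univ j, hlt⟩).ne (hsum.trans hr)

/-- The numerical data of a triangle with area `T` whose sides are `u + v`, `v + w` and `u + w`:
`u`, `v`, `w` are the distances from the vertices to the points of contact of the incircle (Ravi
coordinates), and `area_sq` is Heron's formula in these coordinates. The side `u + v` is called
the base. -/
structure IsHeronian (u v w T : ℤ) : Prop where
  u_pos : 0 < u
  v_pos : 0 < v
  w_pos : 0 < w
  T_pos : 0 < T
  area_sq : T ^ 2 = (u + v + w) * u * v * w

namespace IsHeronian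

variable {u v w T : ℤ}

theorem swap (h : IsHeronian u v w T) : IsHeronian v u w T :=
  ⟨h.v_pos, h.u_pos, h.w_pos, h.T_pos, by rw [h.area_sq]; ring⟩

theorem area_lt_of_mul_le_four (h : IsHeronian u v w T) (huv : u * v ≤ 4) :
    T < u + v + 2 * w := by
  obtain ⟨hu, hv, hw, -, hT⟩ := h
  refine lt_of_pow_lt_pow_left₀ 2 (by positivity) ?_
  calc T ^ 2 = u * v * ((u + v + w) * w) := by rw [hT]; ring
    _ ≤ 4 * ((u + v + w) * w) := by gcongr
    _ < (u + v + 2 * w) ^ 2 := by nlinarith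

theorem mul_le_sq_of_area_le (h : IsHeronian u v w T) (hle : T ≤ u + v + 2 * w) :
    w * (u + v + w) * (u * v - 4) ≤ (u + v) ^ 2 := by
  have hsq : T ^ 2 ≤ (u + v + 2 * w) ^ 2 := pow_le_pow_left₀ h.T_pos.le hle 2
  rw [h.area_sq] at hsq
  linarith

theorem base_le_eight (h : IsHeronian u v w T) (hle : T ≤ u + v + 2 * w) (huv : u ≤ v) :
    u + v ≤ 8 := by
  have hkey := h.mul_le_sq_of_area_le hle
  obtain ⟨hu, hv, hw, hT, hsq⟩ := h
  by_contra! hbase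
  obtain rfl | hu2 : u = 1 ∨ 2 ≤ u := by omega
  · obtain rfl | hw2 : w = 1 ∨ 2 ≤ w := by omega
    · have hlow : v < T := by nlinarith
      have hhigh : T < v + 1 := by nlinarith
      omega
    · have : 2 * (v + 3) ≤ w * (1 + v + w) := by nlinarith
      nlinarith
  · have hprod : 2 * (u + v) - 4 ≤ u * v := by nlinarith
    have : u + v + 1 ≤ w * (u + v + w) := by nlinarith
    nlinarith

theorem eq_of_area_le (h : IsHeronian u v w T) (hle : T ≤ u + v + 2 * w) (huv : u ≤ v)
    (hbase : 5 ≤ u + v) :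
    u = 1 ∧ v = 4 ∧ w = 4 ∧ T = 12 ∨ u = 2 ∧ v = 3 ∧ w = 1 ∧ T = 6 := by
  have hbase8 := h.base_le_eight hle huv
  have hkey := h.mul_le_sq_of_area_le hle
  obtain ⟨hu, hv, hw, hT, hsq⟩ := h
  rcases le_or_gt (u * v) 4 with hsmall | hlarge
  · obtain ⟨rfl, rfl⟩ : u = 1 ∧ v = 4 := by
      obtain rfl | hu2 : u = 1 ∨ 2 ≤ u := by omega
      · omega
      · nlinarith
    have hw4 : w ≤ 4 := by
      by_contra! hw5
      have hlow : 2 * w + 4 < T := by nlinarith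
      have hhigh : T < 2 * w + 5 := by nlinarith
      omega
    have hT13 : T ≤ 13 := by omega
    interval_cases w <;> interval_cases T <;> omega
  · have hwlt : w < u + v := by
      have : w * (u + v + w) ≤ (u + v) ^ 2 :=
        (le_mul_of_one_le_right (by positivity) (by omega)).trans hkey
      nlinarith
    have hT22 : T ≤ 22 := by omega
    have hu4 : u ≤ 4 := by omega
    have hv7 : v ≤ 7 := by omega
    have hw7 : w ≤ 7 := by omega
    interval_cases u <;> interval_cases v <;> try omega
    all_goals interval_cases w <;> try omega
    all_goals interval_cases T <;> omega

theorem five_le_base (h : IsHeronian u v w T) (harea : u + v + 2 * w ≤ T) : 5 ≤ u + v := by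
  by_contra! hbase
  refine harea.not_gt (h.area_lt_of_mul_le_four ?_)
  nlinarith [sq_nonneg (u - v), h.u_pos, h.v_pos]

theorem eq_of_base_eq_five (h : IsHeronian u v w T) (hbase : u + v = 5) (harea : T = 2 * w + 6) :
    (u = 2 ∧ v = 3 ∨ u = 3 ∧ v = 2) ∧ w = 3 ∧ T = 12 := by
  have hlarge : 4 < u * v := by
    by_contra! hsmall
    have := h.area_lt_of_mul_le_four hsmall
    omega
  obtain ⟨hu, hv, hw, hT, hsq⟩ := h
  obtain rfl : v = 5 - u := by omega
  have huv : u = 2 ∨ u = 3 := by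
    have : u < 5 := by omega
    interval_cases u <;> omega
  have hw3 : (w - 3) * (w + 6) = 0 := by
    subst harea
    rcases huv with rfl | rfl <;> linarith
  rcases mul_eq_zero.1 hw3 with _ | _ <;> omega

end IsHeronian

theorem pos_of_mul_mul_pos {R : Type*} [CommRing R] [LinearOrder R] [IsStrictOrderedRing R]
    {x y z : R} (hxy : 0 ≤ x + y) (hxz : 0 ≤ x + z) (h : 0 < x * y * z) : 0 < x := by
  by_contra! hx
  have hy : 0 ≤ y := by linarith
  have hz : 0 ≤ z := by linarith
  exact h.not_ge (by rw [mul_assoc]; exact mul_nonpos_of_nonpos_of_nonneg hx (mul_nonneg hy hz))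

theorem exists_isHeronian_of_heron {a b d m : ℤ} (ha : 0 ≤ a) (hb : 0 ≤ b) (hd : 0 ≤ d) (hm : 0 < m)
    (hheron : 4 * m ^ 2 = (a + b + d) * (a + b - d) * (a - b + d) * (-a + b + d)) :
    ∃ u v w T : ℤ, IsHeronian u v w T ∧ d = u + v ∧ a = v + w ∧ b = u + w ∧ m = 2 * T := by
  obtain ⟨s, hs⟩ : Even (a + b + d) := by
    have heven : Even (4 * m ^ 2) := (by decide : Even (4 : ℤ)).mul_right _
    rw [hheron] at heven
    simp only [Int.even_mul, Int.even_add, Int.even_sub, even_neg] at heven ⊢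
    tauto
  obtain rfl : d = 2 * s - a - b := by omega
  have hsq : m ^ 2 = 2 * (2 * (s * ((s - a) * (s - b) * (a + b - s)))) := by linarith
  obtain ⟨T, rfl⟩ : (2 : ℤ) ∣ m := Int.prime_two.dvd_of_dvd_pow ⟨_, hsq⟩
  have hT : 0 < T := by omega
  have hTsq : T ^ 2 = s * ((s - a) * (s - b) * (a + b - s)) := by linarith
  have hs0 : 0 ≤ s := by omega
  have hprod : 0 < (s - a) * (s - b) * (a + b - s) :=
    pos_of_mul_pos_right (hTsq ▸ pow_pos hT 2) hs0
  have hu : 0 < s - a := pos_of_mul_mul_pos (by omega) (by omega) hprod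
  have hv : 0 < s - b :=
    pos_of_mul_mul_pos (z := a + b - s) (by omega) (by omega) (mul_comm (s - a) _ ▸ hprod)
  have hw : 0 < a + b - s := pos_of_mul_pos_right hprod (mul_pos hu hv).le
  exact ⟨s - a, s - b, a + b - s, T, ⟨hu, hv, hw, hT, by rw [hTsq]; ring⟩,
    by ring, by ring, by ring, rfl⟩

theorem dist2_nonneg (p q : ℝ × ℝ) : 0 ≤ dist2 p q := Real.sqrt_nonneg _

theorem dist2_sq (p q : ℝ × ℝ) : dist2 p q ^ 2 = (p.1 - q.1) ^ 2 + (p.2 - q.2) ^ 2 :=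
  Real.sq_sqrt (by positivity)

theorem dist2_comm (p q : ℝ × ℝ) : dist2 p q = dist2 q p := by
  rw [dist2, dist2, sub_sq_comm, sub_sq_comm p.2]

theorem dist2_eq_zero {p q : ℝ × ℝ} : dist2 p q = 0 ↔ p = q := by
  rw [dist2, Real.sqrt_eq_zero (by positivity), Prod.ext_iff,
    add_eq_zero_iff_of_nonneg (sq_nonneg _) (sq_nonneg _)]
  simp [sub_eq_zero]

theorem cross_swap (p q r : ℝ × ℝ) : cross q p r = -cross p q r := by
  simp only [cross]; ring

theorem collinear3_reverse {p q r : ℝ × ℝ} : Collinear3 p q r ↔ Collinear3 r q p := by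
  simp only [Collinear3, cross]
  constructor <;> intro h <;> linarith

theorem dot2_comm (p q : ℝ × ℝ) : dot2 p q = dot2 q p := by
  simp only [dot2, mul_comm]

theorem dot2_smul_left (t : ℝ) (p q : ℝ × ℝ) : dot2 (t • p) q = t * dot2 p q := by
  simp only [dot2, Prod.smul_fst, Prod.smul_snd, smul_eq_mul]; ring

theorem dot2_smul_right (t : ℝ) (p q : ℝ × ℝ) : dot2 p (t • q) = t * dot2 p q := by
  rw [dot2_comm, dot2_smul_left, dot2_comm]

theorem dot2_sub_eq (p q r : ℝ × ℝ) :
    dot2 (q - p) (r - p) = (dist2 p q ^ 2 + dist2 p r ^ 2 - dist2 q r ^ 2) / 2 := by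
  simp only [dist2_sq, dot2, Prod.fst_sub, Prod.snd_sub]; ring

theorem shoelace_eq_cross_sub_cross (O A B C : ℝ × ℝ) :
    shoelace O A B C = cross O B C - cross O B A := by
  simp only [shoelace, cross]; ring

theorem two_mul_quadArea_of_cross_mul_cross_neg {O A B C : ℝ × ℝ}
    (h : cross O B A * cross O B C < 0) :
    2 * quadArea O A B C = |cross O B A| + |cross O B C| := by
  rw [quadArea, mul_div_cancel₀ _ two_ne_zero, shoelace_eq_cross_sub_cross]
  rcases mul_neg_iff.1 h with ⟨hA, hC⟩ | ⟨hA, hC⟩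
  · rw [abs_of_neg (sub_neg.2 (hC.trans hA)), abs_of_pos hA, abs_of_neg hC]; ring
  · rw [abs_of_pos (sub_pos.2 (hA.trans hC)), abs_of_neg hA, abs_of_pos hC]; ring

theorem four_mul_cross_sq (p q r : ℝ × ℝ) :
    4 * cross p q r ^ 2 = 4 * dist2 p q ^ 2 * dist2 p r ^ 2 -
      (dist2 p q ^ 2 + dist2 p r ^ 2 - dist2 q r ^ 2) ^ 2 := by
  simp only [dist2_sq, cross]; ring

theorem dist2_sq_mul_dot2 (p q r s : ℝ × ℝ) :
    dist2 p q ^ 2 * dot2 (r - p) (s - p) =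
      dot2 (r - p) (q - p) * dot2 (s - p) (q - p) + cross p q r * cross p q s := by
  simp only [dist2_sq, dot2, cross, Prod.fst_sub, Prod.snd_sub]; ring

theorem IsLatticePt.exists_dist2_sq_eq {p q : ℝ × ℝ} (hp : IsLatticePt p) (hq : IsLatticePt q) :
    ∃ n : ℤ, dist2 p q ^ 2 = n := by
  obtain ⟨⟨a, b, rfl⟩, c, d, rfl⟩ := And.intro hp hq
  exact ⟨(a - c) ^ 2 + (b - d) ^ 2, by rw [dist2_sq]; push_cast; rfl⟩

theorem IsLatticePt.exists_cross_eq {p q r : ℝ × ℝ} (hp : IsLatticePt p) (hq : IsLatticePt q)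
    (hr : IsLatticePt r) : ∃ n : ℤ, cross p q r = n := by
  obtain ⟨⟨a, b, rfl⟩, ⟨c, d, rfl⟩, e, f, rfl⟩ := And.intro hp (And.intro hq hr)
  exact ⟨(c - a) * (f - b) - (d - b) * (e - a), by rw [cross]; push_cast; rfl⟩

theorem IsLatticePt.exists_dot2_sub_eq {p q r : ℝ × ℝ} (hp : IsLatticePt p) (hq : IsLatticePt q)
    (hr : IsLatticePt r) : ∃ n : ℤ, dot2 (q - p) (r - p) = n := by
  obtain ⟨⟨a, b, rfl⟩, ⟨c, d, rfl⟩, e, f, rfl⟩ := And.intro hp (And.intro hq hr)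
  exact ⟨(c - a) * (e - a) + (d - b) * (f - b), by rw [dot2]; push_cast; rfl⟩

theorem IsLatticePt.exists_dist2_eq_natCast {p q : ℝ × ℝ} (hp : IsLatticePt p)
    (hq : IsLatticePt q) (hrat : ¬Irrational (dist2 p q)) : ∃ k : ℕ, dist2 p q = k := by
  obtain ⟨n, hn⟩ := hp.exists_dist2_sq_eq hq
  have hsqrt : dist2 p q = √(n : ℝ) := by rw [← hn, Real.sqrt_sq (dist2_nonneg p q)]
  have hn0 : 0 ≤ n := by exact_mod_cast hn ▸ sq_nonneg (dist2 p q)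
  rw [hsqrt, irrational_sqrt_intCast_iff_of_nonneg hn0, not_not] at hrat
  obtain ⟨k, rfl⟩ := hrat
  exact ⟨k.natAbs, by rw [hsqrt, Int.cast_mul, Real.sqrt_mul_self_eq_abs, Nat.cast_natAbs,
    Int.cast_abs]⟩

theorem not_irrational_quadArea {O A B C : ℝ × ℝ} (hO : IsLatticePt O) (hA : IsLatticePt A)
    (hB : IsLatticePt B) (hC : IsLatticePt C) : ¬Irrational (quadArea O A B C) := by
  obtain ⟨m, hm⟩ := hO.exists_cross_eq hB hA
  obtain ⟨n, hn⟩ := hO.exists_cross_eq hB hC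
  refine fun h => h ⟨|(n : ℚ) - m| / 2, ?_⟩
  rw [quadArea, shoelace_eq_cross_sub_cross, hm, hn]
  push_cast
  rfl

theorem not_irrational_sides_of_quadPerim {O A B C : ℝ × ℝ} (hO : IsLatticePt O)
    (hA : IsLatticePt A) (hB : IsLatticePt B) (hC : IsLatticePt C)
    (hperim : ¬Irrational (quadPerim O A B C)) :
    ¬Irrational (dist2 O A) ∧ ¬Irrational (dist2 A B) ∧ ¬Irrational (dist2 B C) ∧
      ¬Irrational (dist2 C O) := by
  let side : Fin 4 → ℝ := ![dist2 O A, dist2 A B, dist2 B C, dist2 C O]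
  have hnonneg (i : Fin 4) : 0 ≤ side i := by fin_cases i <;> exact dist2_nonneg _ _
  have hsq_int (i : Fin 4) : ∃ n : ℤ, side i ^ 2 = n := by
    fin_cases i
    exacts [hO.exists_dist2_sq_eq hA, hA.exists_dist2_sq_eq hB, hB.exists_dist2_sq_eq hC,
      hC.exists_dist2_sq_eq hO]
  have hsq (i : Fin 4) : ∃ q : ℚ, side i ^ 2 = q :=
    (hsq_int i).imp' (↑) fun n hn => by rw [hn, Rat.cast_intCast]
  have hside (i : Fin 4) : ¬Irrational (side i) := fun h => hperim <| by
    have hsum := irrational_sum_of_sq_eq_ratCast hnonneg hsq h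
    rwa [Fin.sum_univ_four] at hsum
  exact ⟨hside 0, hside 1, hside 2, hside 3⟩

/-- The triangle `O A B` is nondegenerate with integer tangent lengths `v`, `w`, `u` at `O`, `A`,
`B` and integer area `T`. Its base is `O B`, the diagonal along which two such triangles are
glued. -/
structure IsHeronianTriangle (O A B : ℝ × ℝ) (u v w T : ℤ) : Prop
    extends IsHeronian u v w T where
  base : dist2 O B = u + v
  left : dist2 O A = v + w
  right : dist2 A B = u + w
  area : |cross O B A| = 2 * T

theorem IsHeronianTriangle.swap {O A B : ℝ × ℝ} {u v w T : ℤ}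
    (h : IsHeronianTriangle O A B u v w T) : IsHeronianTriangle B A O v u w T where
  toIsHeronian := h.toIsHeronian.swap
  base := by rw [dist2_comm, h.base, add_comm]
  left := by rw [dist2_comm, h.right]
  right := by rw [dist2_comm, h.left]
  area := by rw [cross_swap, abs_neg, h.area]

theorem exists_isHeronianTriangle {O A B : ℝ × ℝ} (hO : IsLatticePt O) (hA : IsLatticePt A)
    (hB : IsLatticePt B) (hOA : ¬Irrational (dist2 O A)) (hAB : ¬Irrational (dist2 A B))
    (hOB : ¬Irrational (dist2 O B)) (hcross : cross O B A ≠ 0) :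
    ∃ u v w T : ℤ, IsHeronianTriangle O A B u v w T := by
  obtain ⟨a, ha⟩ := hO.exists_dist2_eq_natCast hA hOA
  obtain ⟨b, hb⟩ := hA.exists_dist2_eq_natCast hB hAB
  obtain ⟨d, hd⟩ := hO.exists_dist2_eq_natCast hB hOB
  obtain ⟨m, hm⟩ := hO.exists_cross_eq hB hA
  have hm0 : 0 < |m| := abs_pos.2 fun h => hcross (by rw [hm, h, Int.cast_zero])
  have hheron : (4 : ℤ) * |m| ^ 2 = (a + b + d) * (a + b - d) * (a - b + d) * (-a + b + d) := by
    have := four_mul_cross_sq O B A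
    rw [hm, hd, ha, dist2_comm B A, hb] at this
    have hint : 4 * m ^ 2 = (4 * d ^ 2 * a ^ 2 - (d ^ 2 + a ^ 2 - b ^ 2) ^ 2 : ℤ) := by
      exact_mod_cast this
    rw [sq_abs, hint]
    ring
  obtain ⟨u, v, w, T, h, hdu, hav, hbu, hmT⟩ := exists_isHeronian_of_heron (Int.natCast_nonneg a)
    (Int.natCast_nonneg b) (Int.natCast_nonneg d) hm0 hheron
  exact ⟨u, v, w, T, h, by rw [hd]; exact_mod_cast hdu, by rw [ha]; exact_mod_cast hav,
    by rw [hb]; exact_mod_cast hbu, by rw [hm]; exact_mod_cast hmT⟩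

theorem dot2_sq_add_dot2_sq_of_orthonormal {e₁ e₂ : ℝ × ℝ} (h₁ : dot2 e₁ e₁ = 1)
    (h₂ : dot2 e₂ e₂ = 1) (h₁₂ : dot2 e₁ e₂ = 0) (v : ℝ × ℝ) :
    dot2 v e₁ ^ 2 + dot2 v e₂ ^ 2 = v.1 ^ 2 + v.2 ^ 2 := by
  simp only [dot2] at *
  grind

theorem isIsometry2_of_orthonormal {e₁ e₂ : ℝ × ℝ} (h₁ : dot2 e₁ e₁ = 1)
    (h₂ : dot2 e₂ e₂ = 1) (h₁₂ : dot2 e₁ e₂ = 0) (P Q : ℝ × ℝ) :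
    IsIsometry2 fun X => Q + (dot2 (X - P) e₁, dot2 (X - P) e₂) := by
  have hdist (X Y : ℝ × ℝ) : dist2 (Q + (dot2 (X - P) e₁, dot2 (X - P) e₂))
      (Q + (dot2 (Y - P) e₁, dot2 (Y - P) e₂)) = dist2 X Y := by
    have hnorm := dot2_sq_add_dot2_sq_of_orthonormal h₁ h₂ h₁₂ (X - Y)
    rw [Prod.fst_sub, Prod.snd_sub] at hnorm
    rw [dist2, dist2, ← hnorm]
    congr 1
    simp only [dot2, Prod.fst_add, Prod.snd_add, Prod.fst_sub, Prod.snd_sub]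
    ring
  refine ⟨⟨fun X Y hXY => ?_, fun Y => ⟨P + (Y - Q).1 • e₁ + (Y - Q).2 • e₂, ?_⟩⟩, hdist⟩
  · rw [← dist2_eq_zero, ← hdist, dist2_eq_zero]
    exact hXY
  · simp only [dot2] at h₁ h₂ h₁₂
    ext <;> simp only [dot2, Prod.fst_add, Prod.snd_add, Prod.fst_sub, Prod.snd_sub,
      Prod.smul_fst, Prod.smul_snd, smul_eq_mul]
    · linear_combination (Y.1 - Q.1) * h₁ + (Y.2 - Q.2) * h₁₂
    · linear_combination (Y.2 - Q.2) * h₂ + (Y.1 - Q.1) * h₁₂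

/-- Congruence of two subsets of the plane, by an isometry that may reverse orientation. -/
def IsCongruent2 (S S' : Set (ℝ × ℝ)) : Prop :=
  ∃ φ : ℝ × ℝ → ℝ × ℝ, IsIsometry2 φ ∧ φ '' S = S'

/-- The vertices of the right trapezoid with side lengths `6, 4, 3, 5`. -/
def rightTrapezoid : Set (ℝ × ℝ) := {(0, 0), (6, 0), (6, 4), (3, 4)}

theorem isCongruent2_rightTrapezoid {O A B C : ℝ × ℝ} (hOA : dist2 O A = 4)
    (hAB : dist2 A B = 3) (hBC : dist2 B C = 5) (hOC : dist2 O C = 6) (hOB : dist2 O B = 5)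
    (hperp : dot2 (A - O) (C - O) = 0) : IsCongruent2 {O, A, B, C} rightTrapezoid := by
  have hAA : dot2 (A - O) (A - O) = 16 := by
    rw [dot2_sub_eq, dist2_eq_zero.2 rfl, hOA]; norm_num
  have hCC : dot2 (C - O) (C - O) = 36 := by
    rw [dot2_sub_eq, dist2_eq_zero.2 rfl, hOC]; norm_num
  have hBA : dot2 (B - O) (A - O) = 16 := by
    rw [dot2_sub_eq, dist2_comm B A, hOB, hOA, hAB]; norm_num
  have hBC' : dot2 (B - O) (C - O) = 18 := by rw [dot2_sub_eq, hOB, hOC, hBC]; norm_num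
  have hperp' : dot2 (C - O) (A - O) = 0 := by rw [dot2_comm, hperp]
  have hzero (v : ℝ × ℝ) : dot2 0 v = 0 := by simp [dot2]
  refine ⟨_, isIsometry2_of_orthonormal (e₁ := (-1 / 6 : ℝ) • (C - O))
    (e₂ := (1 / 4 : ℝ) • (A - O)) ?_ ?_ ?_ O (6, 0), ?_⟩
  · rw [dot2_smul_left, dot2_smul_right, hCC]; norm_num
  · rw [dot2_smul_left, dot2_smul_right, hAA]; norm_num
  · rw [dot2_smul_left, dot2_smul_right, hperp']; norm_num
  · simp only [Set.image_insert_eq, Set.image_singleton, dot2_smul_right, sub_self, hzero, hAA,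
      hCC, hBA, hBC', hperp, hperp', rightTrapezoid]
    norm_num
    grind

/-- A lattice equable quadrilateral `O A B C` cut by its interior diagonal `O B` into two Heronian
triangles, both with base `O B`; `equable` equates the total area with the perimeter. -/
structure SplitLEQ (O A B C : ℝ × ℝ) (u v w T u' v' w' T' : ℤ) : Prop where
  latticeO : IsLatticePt O
  latticeA : IsLatticePt A
  latticeB : IsLatticePt B
  latticeC : IsLatticePt C
  triangleA : IsHeronianTriangle O A B u v w T
  triangleC : IsHeronianTriangle O C B u' v' w' T'
  opposite : cross O B A * cross O B C < 0
  equable : T + T' = (u + v + 2 * w) + (u' + v' + 2 * w')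
  not_collinear_ABC : ¬Collinear3 A B C
  not_collinear_COA : ¬Collinear3 C O A

theorem IsHeronianTriangle.dot2_eq {O A B : ℝ × ℝ} {u v w T : ℤ}
    (h : IsHeronianTriangle O A B u v w T) :
    dot2 (A - O) (B - O) = v * (u + v + w) - u * w := by
  rw [dot2_sub_eq, h.left, h.base, h.right]; ring

namespace SplitLEQ

variable {O A B C : ℝ × ℝ} {u v w T u' v' w' T' : ℤ}

theorem swap_triangles (h : SplitLEQ O A B C u v w T u' v' w' T') :
    SplitLEQ O C B A u' v' w' T' u v w T where
  latticeO := h.latticeO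
  latticeA := h.latticeC
  latticeB := h.latticeB
  latticeC := h.latticeA
  triangleA := h.triangleC
  triangleC := h.triangleA
  opposite := mul_comm (cross O B A) _ ▸ h.opposite
  equable := by rw [add_comm, h.equable, add_comm]
  not_collinear_ABC := collinear3_reverse.not.1 h.not_collinear_ABC
  not_collinear_COA := collinear3_reverse.not.1 h.not_collinear_COA

theorem swap_endpoints (h : SplitLEQ O A B C u v w T u' v' w' T') :
    SplitLEQ B A O C v u w T v' u' w' T' where
  latticeO := h.latticeB
  latticeA := h.latticeA
  latticeB := h.latticeO
  latticeC := h.latticeC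
  triangleA := h.triangleA.swap
  triangleC := h.triangleC.swap
  opposite := by rw [cross_swap, cross_swap O B C, neg_mul_neg]; exact h.opposite
  equable := by rw [h.equable]; ring
  not_collinear_ABC := collinear3_reverse.not.1 h.not_collinear_COA
  not_collinear_COA := collinear3_reverse.not.1 h.not_collinear_ABC

theorem base_eq (h : SplitLEQ O A B C u v w T u' v' w' T') : u' + v' = u + v := by
  exact_mod_cast h.triangleC.base.symm.trans h.triangleA.base

theorem sq_mul_dot2 (h : SplitLEQ O A B C u v w T u' v' w' T') :
    ((u + v) ^ 2 : ℝ) * dot2 (A - O) (C - O) =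
      (v * (u + v + w) - u * w) * (v' * (u' + v' + w') - u' * w') - 4 * T * T' := by
  have hcross : cross O B A * cross O B C = -(2 * T * (2 * T')) := by
    rw [← h.triangleA.area, ← h.triangleC.area, ← abs_mul, abs_of_neg h.opposite, neg_neg]
  have hdot := dist2_sq_mul_dot2 O B A C
  rw [h.triangleA.base, h.triangleA.dot2_eq, h.triangleC.dot2_eq, hcross] at hdot
  rw [hdot]
  ring

theorem base_sq_dvd (h : SplitLEQ O A B C u v w T u' v' w' T') : (u + v) ^ 2 ∣
    (v * (u + v + w) - u * w) * (v' * (u' + v' + w') - u' * w') - 4 * T * T' := by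
  obtain ⟨k, hk⟩ := h.latticeO.exists_dot2_sub_eq h.latticeA h.latticeC
  exact ⟨k, by have := h.sq_mul_dot2; rw [hk] at this; exact_mod_cast this.symm⟩

theorem params_eq_of_area_le (h : SplitLEQ O A B C u v w T u' v' w' T')
    (hT : T ≤ u + v + 2 * w) (huv : u ≤ v) :
    u = 1 ∧ v = 4 ∧ w = 4 ∧ T = 12 ∧ u' = 2 ∧ v' = 3 ∧ w' = 3 ∧ T' = 12 ∨
      u = 2 ∧ v = 3 ∧ w = 1 ∧ T = 6 ∧ u' = 2 ∧ v' = 3 ∧ w' = 3 ∧ T' = 12 := by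
  have hbase := h.base_eq
  have hbase5 : 5 ≤ u' + v' := h.triangleC.five_le_base (by linarith [h.equable])
  have hA := h.triangleA.eq_of_area_le hT huv (by omega)
  have hC := h.triangleC.eq_of_base_eq_five (by omega) (by have := h.equable; omega)
  have hdvd := h.base_sq_dvd
  obtain ⟨hu'v', rfl, rfl⟩ := hC
  -- Divisibility excludes attaching the second triangle with its base reversed.
  rcases hA with ⟨rfl, rfl, rfl, rfl⟩ | ⟨rfl, rfl, rfl, rfl⟩ <;>
    rcases hu'v' with ⟨rfl, rfl⟩ | ⟨rfl, rfl⟩ <;> revert hdvd <;> decide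

-- The triangle `O A C` is then the right triangle with sides 6, 8, 10, and `B` is the midpoint of
-- its hypotenuse.
theorem collinear3_of_params (h : SplitLEQ O A B C 1 4 4 12 2 3 3 12) : Collinear3 A B C := by
  have hdot := h.sq_mul_dot2
  have hOA := h.triangleA.left
  have hAB := h.triangleA.right
  have hOC := h.triangleC.left
  have hBC := h.triangleC.right
  have hAC := dot2_sub_eq O A C
  norm_num at hdot hOA hAB hOC hBC
  have hcross := four_mul_cross_sq A B C
  rw [hdot, hOA, hOC] at hAC
  have hAC100 : dist2 A C ^ 2 = 100 := by linarith
  rw [hAB, dist2_comm B, hBC, hAC100] at hcross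
  exact pow_eq_zero_iff two_ne_zero |>.1 (by linarith)

theorem base_eq_five_and_isCongruent2 (h : SplitLEQ O A B C u v w T u' v' w' T') :
    dist2 O B = 5 ∧ IsCongruent2 {O, A, B, C} rightTrapezoid := by
  wlog hT : T ≤ u + v + 2 * w generalizing A C u v w T u' v' w' T' with H
  · have hT' : T' ≤ u' + v' + 2 * w' := by linarith [h.equable]
    have hset : ({O, A, B, C} : Set (ℝ × ℝ)) = {O, C, B, A} := by grind
    rw [hset]
    exact H h.swap_triangles hT'
  wlog huv : u ≤ v generalizing O B u v u' v' with H
  · have hset : ({O, A, B, C} : Set (ℝ × ℝ)) = {B, A, O, C} := by grind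
    rw [hset, dist2_comm]
    exact H h.swap_endpoints (by linarith) (by omega)
  rcases h.params_eq_of_area_le hT huv with ⟨rfl, rfl, rfl, rfl, rfl, rfl, rfl, rfl⟩ |
    ⟨rfl, rfl, rfl, rfl, rfl, rfl, rfl, rfl⟩
  · exact absurd h.collinear3_of_params h.not_collinear_ABC
  · have hOB := h.triangleA.base
    have hOA := h.triangleA.left
    have hAB := h.triangleA.right
    have hOC := h.triangleC.left
    have hCB := h.triangleC.right
    have hperp := h.sq_mul_dot2
    norm_num at hOB hOA hAB hOC hCB hperp
    exact ⟨hOB, isCongruent2_rightTrapezoid hOA hAB (dist2_comm C B ▸ hCB) hOC hOB hperp⟩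

end SplitLEQ

theorem exists_splitLEQ {O A B C : ℝ × ℝ} (hO : IsLatticePt O) (hA : IsLatticePt A)
    (hB : IsLatticePt B) (hC : IsLatticePt C) (hABC : ¬Collinear3 A B C)
    (hCOA : ¬Collinear3 C O A) (hequable : quadArea O A B C = quadPerim O A B C)
    (hinterior : cross O B A * cross O B C < 0) (hOB : ¬Irrational (dist2 O B)) :
    ∃ u v w T u' v' w' T' : ℤ, SplitLEQ O A B C u v w T u' v' w' T' := by
  obtain ⟨hOA, hAB, hBC, hCO⟩ :=
    not_irrational_sides_of_quadPerim hO hA hB hC (hequable ▸ not_irrational_quadArea hO hA hB hC)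
  rw [dist2_comm] at hBC hCO
  obtain ⟨u, v, w, T, hTA⟩ :=
    exists_isHeronianTriangle hO hA hB hOA hAB hOB (left_ne_zero_of_mul hinterior.ne)
  obtain ⟨u', v', w', T', hTC⟩ :=
    exists_isHeronianTriangle hO hC hB hCO hBC hOB (right_ne_zero_of_mul hinterior.ne)
  have harea : (T + T' : ℝ) = (u + v + 2 * w) + (u' + v' + 2 * w') := by
    have hsum := two_mul_quadArea_of_cross_mul_cross_neg hinterior
    rw [hequable, quadPerim, dist2_comm B C, dist2_comm C O, hTA.left, hTA.right, hTC.left,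
      hTC.right, hTA.area, hTC.area] at hsum
    linarith
  exact ⟨u, v, w, T, u', v', w', T', hO, hA, hB, hC, hTA, hTC, hinterior,
    by exact_mod_cast harea, hABC, hCOA⟩

/-- a lattice equable quadrilateral with a rational interior
diagonal is congruent to the 6,4,3,5 right trapezoid, the diagonal having
length 5. -/
theorem rational_interior_diagonal (O A B C : ℝ × ℝ)
    (hquad : IsQuad O A B C)
    (hlat : IsLatticePt O ∧ IsLatticePt A ∧ IsLatticePt B ∧ IsLatticePt C)
    (hequable : quadArea O A B C = quadPerim O A B C)
    (hinterior : cross O B A * cross O B C < 0)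
    (hrat : ∃ q : ℚ, dist2 O B = (q : ℝ)) :
    dist2 O B = 5 ∧
    ∃ φ : ℝ × ℝ → ℝ × ℝ, IsIsometry2 φ ∧
      φ '' {O, A, B, C} =
        ({((0 : ℝ), (0 : ℝ)), ((6 : ℝ), (0 : ℝ)), ((6 : ℝ), (4 : ℝ)), ((3 : ℝ), (4 : ℝ))} :
          Set (ℝ × ℝ)) := by
  obtain ⟨⟨-, hABC, -, hCOA, -⟩, -⟩ := hquad
  obtain ⟨hO, hA, hB, hC⟩ := hlat
  obtain ⟨q, hq⟩ := hrat
  have hOB : ¬Irrational (dist2 O B) := fun h => h ⟨q, hq.symm⟩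
  obtain ⟨u, v, w, T, u', v', w', T', hsplit⟩ :=
    exists_splitLEQ hO hA hB hC hABC hCOA hequable hinterior hOB
  exact hsplit.base_eq_five_and_isCongruent2
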